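/- Let g ≥ 2 be even and u ∈ ℂ[α,γ]. If γ²·u ∈ J_g^+, then u ∈ J_{g−4}^+ (where for negative indices m we set J_m^+ to be the ideal generated by ζ_m^+, ζ_{m+1}^+, ζ_{m+2}^+ with the convention ζ_k^+ = 0 for k < 0 and ζ_0^+ = 1, so J_m^+ is the unit ideal for m ≤ 0). -/

import Mathlib

open MvPolynomial

/-- ζ_k^+ ∈ ℂ[α,γ] (variables: X 0 = α, X 1 = γ):
    ζ_{k+1}^+ = α ζ_k^+ + 16k² ζ_{k−1}^+ + 2k(k−1) γ ζ_{k−2}^+ for k even, and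
    ζ_{k+1}^+ = α ζ_k^+ + 2k(k−1) γ ζ_{k−2}^+ for k odd. -/
noncomputable def zp : ℕ → MvPolynomial (Fin 2) ℂ
  | 0 => 1
  | 1 => X 0
  | 2 => X 0 * zp 1
  | (n + 3) =>
      if n % 2 = 0 then
        X 0 * zp (n + 2) + C (16 * ((n : ℂ) + 2) ^ 2) * zp (n + 1)
          + C (2 * ((n : ℂ) + 2) * ((n : ℂ) + 1)) * X 1 * zp n
      else
        X 0 * zp (n + 2) + C (2 * ((n : ℂ) + 2) * ((n : ℂ) + 1)) * X 1 * zp n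

/-- ζ_k^+ for an integer index k, with ζ_k^+ = 0 for k < 0. -/
noncomputable def zpZ (k : ℤ) : MvPolynomial (Fin 2) ℂ :=
  if k < 0 then 0 else zp k.toNat

/-- J_g^+ = (ζ_g^+, ζ_{g+1}^+, ζ_{g+2}^+) ⊆ ℂ[α,γ], for a natural number g. -/
noncomputable def Jp (g : ℕ) : Ideal (MvPolynomial (Fin 2) ℂ) :=
  Ideal.span {zp g, zp (g + 1), zp (g + 2)}

/-- J_m^+ for an integer index m (the unit ideal for m ≤ 0, since ζ_0^+ = 1). -/
noncomputable def JpZ (m : ℤ) : Ideal (MvPolynomial (Fin 2) ℂ) :=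
  Ideal.span {zpZ m, zpZ (m + 1), zpZ (m + 2)}

/-- Backward recursion lemma: in a ring where the tail vanishes, `α * o M = 0`. -/
lemma aux_socle {A : Type*} [CommRing A] [Algebra ℂ A] (α γ : A) (e o : ℕ → A) (M : ℕ)
    (ho0 : o 0 = 0) (ho1 : o 1 = α * e 0)
    (hE : ∀ j : ℕ, (2 * (j : A) + 2) * e (j + 1) = α * o (j + 1) + 2 * γ * o j)
    (hO : ∀ j : ℕ, (2 * (j : A) + 3) * o (j + 2)
      = α * e (j + 1) + 32 * ((j : A) + 1) * o (j + 1) + 2 * γ * e j)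
    (h1 : e M = 0) (h2 : o (M + 1) = 0) (h3 : γ * o M = 0) : α * o M = 0 := by
  set I : A := algebraMap ℂ A Complex.I with hI
  have hII : I * I = -1 := by rw [hI, ← map_mul, Complex.I_mul_I]; simp
  have hunit : ∀ c : ℂ, c ≠ 0 → IsUnit (algebraMap ℂ A c) := fun c hc =>
    (isUnit_iff_ne_zero.mpr hc).map _
  have h8 : ∀ x : A, (8 * I) * x = 0 → x = 0 := by
    intro x hx
    have h := hunit (8 * Complex.I) (by simp)
    have h' : algebraMap ℂ A (8 * Complex.I) = 8 * I := by rw [map_mul, map_ofNat]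
    rw [h'] at h
    exact (h.mul_right_eq_zero).1 hx
  have key : ∀ r : ℕ, ∀ j : ℕ, j + r = M →
      ((-2 * γ) ^ r * (e j + 4 * I * o j)
        = (∏ t ∈ Finset.range r, (α - 8 * I * ((M : A) - (t : A)))) * (4 * I * o M)) ∧
      ((-2 * γ) ^ r * (e j - 4 * I * o j)
        = - (∏ t ∈ Finset.range r, (α + 8 * I * ((M : A) - (t : A)))) * (4 * I * o M)) ∧
      (-2 * γ) ^ r * o (j + 1) = 0 := by
    intro r
    induction r with
    | zero =>
      intro j hj
      obtain rfl : j = M := by simpa using hj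
      simp [h1, h2]
    | succ r ih =>
      intro j hj
      obtain ⟨p1, p2, p3⟩ := ih (j + 1) (by omega)
      have hjM : (M : A) - (r : A) = (j : A) + 1 := by
        rw [← hj]; push_cast; ring
      have q1 := hE j
      have q2 := hO j
      rw [Finset.prod_range_succ, Finset.prod_range_succ, hjM]
      refine ⟨?_, ?_, ?_⟩
      · rw [pow_succ]
        linear_combination (α - 8 * I * ((j : A) + 1)) * p1 + (-2 * γ) ^ r * q2
          + 4 * I * (-2 * γ) ^ r * q1 - (2 * (j : A) + 3) * p3
          + 32 * (-2 * γ) ^ r * ((j : A) + 1) * o (j + 1) * hII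
      · rw [pow_succ]
        linear_combination (α + 8 * I * ((j : A) + 1)) * p2 + (-2 * γ) ^ r * q2
          - 4 * I * (-2 * γ) ^ r * q1 - (2 * (j : A) + 3) * p3
          + 32 * (-2 * γ) ^ r * ((j : A) + 1) * o (j + 1) * hII
      · apply h8
        rw [pow_succ]
        set P := ∏ t ∈ Finset.range r, (α - 8 * I * ((M : A) - (t : A)))
        set Q := ∏ t ∈ Finset.range r, (α + 8 * I * ((M : A) - (t : A)))
        linear_combination (-2 * γ) * p1 - (-2 * γ) * p2 - 2 * (P + Q) * 4 * I * h3
  obtain ⟨p1, p2, p3⟩ := key M 0 (by simp)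
  rw [ho0] at p1 p2
  rw [zero_add, ho1] at p3
  set P := ∏ t ∈ Finset.range M, (α - 8 * I * ((M : A) - (t : A))) with hP
  set Q := ∏ t ∈ Finset.range M, (α + 8 * I * ((M : A) - (t : A))) with hQ
  have a1 : P * (α * o M) = 0 := by
    apply h8; linear_combination -2 * α * p1 + 2 * p3
  have a2 : Q * (α * o M) = 0 := by
    apply h8; linear_combination 2 * α * p2 - 2 * p3
  have hcop : IsCoprime P Q := by
    apply IsCoprime.prod_left
    intro s hs
    apply IsCoprime.prod_right
    intro t ht
    rw [Finset.mem_range] at hs ht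
    have hu := hunit (8 * Complex.I * (((M - t + (M - s) : ℕ)) : ℂ)) (by
      have : M - t + (M - s) ≠ 0 := by omega
      have : ((M - t + (M - s) : ℕ) : ℂ) ≠ 0 := by exact_mod_cast this
      simp only [ne_eq, mul_eq_zero, not_or]
      exact ⟨⟨by norm_num, Complex.I_ne_zero⟩, this⟩)
    obtain ⟨v, hv⟩ := hu.exists_left_inv
    refine ⟨-v, v, ?_⟩
    rw [← hv]
    have : ((M - t + (M - s) : ℕ) : ℂ) = (M : ℂ) - t + (M - s) := by
      rw [Nat.cast_add, Nat.cast_sub ht.le, Nat.cast_sub hs.le]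
    rw [this]
    simp only [map_mul, map_add, map_sub, map_natCast, map_ofNat]
    ring
  obtain ⟨x, y, hxy⟩ := hcop
  linear_combination (-(α * o M)) * hxy + x * a1 + y * a2

lemma zp_odd (j : ℕ) : zp (2 * j + 3) = X 0 * zp (2 * j + 2)
    + 16 * (2 * (j : MvPolynomial (Fin 2) ℂ) + 2) ^ 2 * zp (2 * j + 1)
    + 2 * (2 * (j : MvPolynomial (Fin 2) ℂ) + 2) * (2 * (j : MvPolynomial (Fin 2) ℂ) + 1)
      * X 1 * zp (2 * j) := by
  rw [zp, if_pos (by omega)]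
  push_cast
  simp only [map_mul, map_add, map_pow, map_natCast, map_ofNat, map_one]

lemma zp_even (j : ℕ) : zp (2 * j + 4) = X 0 * zp (2 * j + 3)
    + 2 * (2 * (j : MvPolynomial (Fin 2) ℂ) + 3) * (2 * (j : MvPolynomial (Fin 2) ℂ) + 2)
      * X 1 * zp (2 * j + 1) := by
  rw [show 2 * j + 4 = (2 * j + 1) + 3 by ring, zp, if_neg (by omega)]
  push_cast
  simp only [map_mul, map_add, map_pow, map_natCast, map_ofNat, map_one]
  ring

lemma nat_cancel {A : Type*} [CommRing A] [Algebra ℂ A] (n : ℕ) (hn : n ≠ 0) (x : A)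
    (h : (n : A) * x = 0) : x = 0 := by
  have hu : IsUnit (algebraMap ℂ A (n : ℂ)) :=
    (isUnit_iff_ne_zero.mpr (by exact_mod_cast hn)).map _
  rw [map_natCast] at hu
  exact (hu.mul_right_eq_zero).1 h

/-- `α ζ_{m-1} ∈ J_m` for even `m = 2j+2`. -/
lemma alpha_mul_mem (j : ℕ) : X 0 * zp (2 * j + 1) ∈ Jp (2 * j + 2) := by
  set J := Jp (2 * j + 2) with hJ
  rw [← Ideal.Quotient.eq_zero_iff_mem]
  set φ := Ideal.Quotient.mk J with hφ
  have m1 : φ (zp (2 * j + 2)) = 0 := Ideal.Quotient.eq_zero_iff_mem.2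
    (Ideal.subset_span (by simp))
  have m2 : φ (zp (2 * j + 3)) = 0 := Ideal.Quotient.eq_zero_iff_mem.2
    (Ideal.subset_span (by simp))
  have m3 : φ (zp (2 * j + 4)) = 0 := Ideal.Quotient.eq_zero_iff_mem.2
    (Ideal.subset_span (by simp))
  let f : ℕ → (MvPolynomial (Fin 2) ℂ ⧸ J) := fun k => algebraMap ℂ _ ((k.factorial : ℂ)⁻¹)
  have hf : ∀ k : ℕ, ((k : MvPolynomial (Fin 2) ℂ ⧸ J) + 1) * f (k + 1) = f k := by
    intro k
    simp only [f]
    have : ((k : MvPolynomial (Fin 2) ℂ ⧸ J) + 1) = algebraMap ℂ _ ((k : ℂ) + 1) := by simp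
    rw [this, ← map_mul]
    congr 1
    have h1 : (k : ℂ) + 1 ≠ 0 := by exact_mod_cast Nat.succ_ne_zero k
    have h2 : (k.factorial : ℂ) ≠ 0 := by exact_mod_cast k.factorial_ne_zero
    rw [Nat.factorial_succ]; push_cast
    field_simp
  let e : ℕ → (MvPolynomial (Fin 2) ℂ ⧸ J) := fun k => f (2 * k) * φ (zp (2 * k))
  let o : ℕ → (MvPolynomial (Fin 2) ℂ ⧸ J) := fun k =>
    match k with
    | 0 => 0
    | k + 1 => f (2 * k + 1) * φ (zp (2 * k + 1))
  have hz1 : zp 1 = X 0 := by rw [zp]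
  have hz0 : zp 0 = 1 := by rw [zp]
  have hz2 : zp 2 = X 0 * zp 1 := by conv_lhs => rw [zp]
  have hf0 : f 1 = f 0 := by simpa using hf 0
  have hfu : IsUnit (f (2 * j + 1)) := by
    refine (isUnit_iff_ne_zero.mpr (inv_ne_zero ?_)).map _
    exact_mod_cast Nat.factorial_ne_zero _
  have res := aux_socle (φ (X 0)) (φ (X 1)) e o (j + 1) rfl
    (by simp [o, e, hz1, hz0, hf0, mul_comm])
    (by
      intro k
      cases k with
      | zero =>
        simp only [o, e]
        have := hf 1
        simp [hz2, hz1] at this ⊢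
        linear_combination (φ (X 0) * φ (X 0)) * this
      | succ k =>
        simp only [o, e]
        have a0 := hf (2 * k + 3)
        have a1 := hf (2 * k + 2)
        have a2 := hf (2 * k + 1)
        rw [show 2 * (k + 1 + 1) = 2 * k + 4 by ring, show 2 * (k + 1) + 1 = 2 * k + 3 by ring,
          zp_even k]
        simp only [map_add, map_mul, map_natCast, map_ofNat]
        push_cast at a0 a1 a2 ⊢
        simp only [Nat.add_assoc, Nat.reduceAdd] at a0 a1 a2
        linear_combination (φ (X 0) * φ (zp (2 * k + 3)) + 2 * (2 * (k : MvPolynomial (Fin 2) ℂ ⧸ J) + 3)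
          * (2 * (k : MvPolynomial (Fin 2) ℂ ⧸ J) + 2) * φ (X 1) * φ (zp (2 * k + 1))) * a0
          + 2 * (2 * (k : MvPolynomial (Fin 2) ℂ ⧸ J) + 2) * φ (X 1) * φ (zp (2 * k + 1)) * a1
          + 2 * φ (X 1) * φ (zp (2 * k + 1)) * a2)
    (by
      intro k
      simp only [o, e]
      have a0 := hf (2 * k + 2)
      have a1 := hf (2 * k + 1)
      have a2 := hf (2 * k)
      rw [show 2 * (k + 1) = 2 * k + 2 by ring, show 2 * k + 2 + 1 = 2 * k + 3 by ring,
        zp_odd k]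
      simp only [map_add, map_mul, map_pow, map_one, map_natCast, map_ofNat]
      push_cast at a0 a1 a2 ⊢
      simp only [Nat.add_assoc, Nat.reduceAdd] at a0 a1 a2
      linear_combination (φ (X 0) * φ (zp (2 * k + 2)) +
          16 * (2 * (k : MvPolynomial (Fin 2) ℂ ⧸ J) + 2) ^ 2 * φ (zp (2 * k + 1))
          + 2 * (2 * (k : MvPolynomial (Fin 2) ℂ ⧸ J) + 2) * (2 * (k : MvPolynomial (Fin 2) ℂ ⧸ J) + 1) * φ (X 1) * φ (zp (2 * k))) * a0
          + (16 * (2 * (k : MvPolynomial (Fin 2) ℂ ⧸ J) + 2) * φ (zp (2 * k + 1)) +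
            2 * (2 * (k : MvPolynomial (Fin 2) ℂ ⧸ J) + 1) * φ (X 1) * φ (zp (2 * k))) * a1
          + 2 * φ (X 1) * φ (zp (2 * k)) * a2)
    (by simp only [e]; rw [show 2 * (j + 1) = 2 * j + 2 by ring, m1, mul_zero])
    (by simp only [o]; rw [show 2 * (j + 1) + 1 = 2 * j + 3 by ring, m2, mul_zero])
    (by
      simp only [o]
      have h := m3
      rw [zp_even j, map_add, map_mul, m2, mul_zero, zero_add] at h
      apply nat_cancel (2 * (2 * j + 3) * (2 * j + 2)) (by positivity)
      simp only [map_add, map_mul, map_natCast, map_ofNat] at h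
      push_cast
      linear_combination f (2 * j + 1) * h)
  simp only [o] at res
  rw [map_mul]
  have : f (2 * j + 1) * (φ (X 0) * φ (zp (2 * j + 1))) = 0 := by rw [← res]; ring
  exact (hfu.mul_right_eq_zero).1 this

lemma not_dvd_zp_odd (j : ℕ) : ¬ (X 1 : MvPolynomial (Fin 2) ℂ) ∣ zp (2 * j + 1) := by
  have hp : Prime (X 1 : MvPolynomial (Fin 2) ℂ) := MvPolynomial.X_prime
  have base : ∀ n : ℕ, ¬ (X 1 : MvPolynomial (Fin 2) ℂ) ∣ X 0 ^ 2 + (n : MvPolynomial (Fin 2) ℂ) := by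
    rintro n ⟨q, hq⟩
    have := congrArg (MvPolynomial.eval ![(1 : ℂ), 0]) hq
    simp at this
    have h : ((1 + n : ℕ) : ℂ) = 0 := by push_cast; exact this
    rw [Nat.cast_eq_zero] at h
    omega
  induction j with
  | zero =>
    rw [show zp (2 * 0 + 1) = X 0 by simp [zp]]
    rintro ⟨q, hq⟩
    have := congrArg (MvPolynomial.eval ![(1 : ℂ), 0]) hq
    simp at this
  | succ j ih =>
    intro h
    have h' : (X 1 : MvPolynomial (Fin 2) ℂ) ∣
        (X 0 ^ 2 + ((16 * (2 * j + 2) ^ 2 : ℕ) : MvPolynomial (Fin 2) ℂ)) * zp (2 * j + 1) := by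
      rw [show 2 * (j + 1) + 1 = 2 * j + 3 by ring, zp_odd] at h
      have hz : ∃ q, zp (2 * j + 2) = X 0 * zp (2 * j + 1) + X 1 * q := by
        cases j with
        | zero => exact ⟨0, by simp [zp]⟩
        | succ j => exact ⟨_, by
            rw [show 2 * (j + 1) + 2 = 2 * j + 4 by ring, zp_even,
              show 2 * (j + 1) + 1 = 2 * j + 3 by ring, add_right_inj, mul_right_comm, mul_comm]⟩
      obtain ⟨q, hq⟩ := hz
      obtain ⟨s, hs⟩ := h
      refine ⟨s - X 0 * q - 2 * (2 * (j : MvPolynomial (Fin 2) ℂ) + 2) *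
        (2 * (j : MvPolynomial (Fin 2) ℂ) + 1) * zp (2 * j), ?_⟩
      push_cast
      linear_combination hs - X 0 * hq
    rcases hp.dvd_or_dvd h' with h | h
    · exact base _ h
    · exact ih h

lemma stage_one {R : Type*} [CommRing R] [IsDomain R] (α γ y3 y4 y5 y6 y7 y8 U a b d G : R)
    (hp : Prime γ) (h5 : ¬ γ ∣ y5)
    (r6 : y6 = α * y5 + 2 * (G - 1) * (G - 2) * γ * y3)
    (r7 : y7 = α * y6 + 16 * G ^ 2 * y5 + 2 * G * (G - 1) * γ * y4)
    (r8 : y8 = α * y7 + 2 * (G + 1) * G * γ * y5)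
    (h : γ * U = a * y6 + b * y7 + d * y8) :
    ∃ p q r, 16 * G ^ 2 * U = p * (α * y4 - 16 * G * (G - 2) * y3) + q * y5 + γ * r * y4 := by
  have hd : γ ∣ (a * α + (b + d * α) * (α ^ 2 + 16 * G ^ 2)) * y5 := by
    refine ⟨U - d * (2 * (G + 1) * G) * y5 - (a + (b + d * α) * α) * (2 * (G - 1) * (G - 2)) * y3
      - (b + d * α) * (2 * G * (G - 1)) * y4, ?_⟩
    linear_combination -h - d * r8 - (b + d * α) * r7 - (a + (b + d * α) * α) * r6
  obtain ⟨s, hs⟩ := (hp.dvd_or_dvd hd).resolve_right h5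
  set q := a + (b + d * α) * α with hq
  refine ⟨-q * (2 * G * (G - 1)), s * (16 * G ^ 2) + 16 * G ^ 2 * d * (2 * (G + 1) * G),
    s * (2 * G * (G - 1)), ?_⟩
  apply mul_left_cancel₀ hp.ne_zero
  have hb : 16 * G ^ 2 * (b + d * α) = γ * s - α * q := by rw [hq]; linear_combination hs
  linear_combination 16 * G ^ 2 * h + 16 * G ^ 2 * d * r8 + (y7 - α * y6) * hb
    + (γ * s - α * q) * r7 + 16 * G ^ 2 * q * r6

lemma stage_two {R : Type*} [CommRing R] [IsDomain R] (α γ y1 y2 y3 y4 y5 U p q r G : R)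
    (hp : Prime γ) (h3 : ¬ γ ∣ y3)
    (r4 : y4 = α * y3 + 2 * (G - 3) * (G - 4) * γ * y1)
    (r5 : y5 = α * y4 + 16 * (G - 2) ^ 2 * y3 + 2 * (G - 2) * (G - 3) * γ * y2)
    (h : γ * U = p * (α * y4 - 16 * G * (G - 2) * y3) + q * y5 + γ * r * y4) :
    ∃ c1 c2 c3 c4, 32 * (G - 2) * (G - 1) * U
      = c1 * (α * y1) + c2 * y2 + c3 * y3 + c4 * y4 := by
  have hd : γ ∣ ((p + q) * (α ^ 2 - 16 * G * (G - 2)) + 32 * (G - 2) * (G - 1) * q) * y3 := by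
    refine ⟨U - r * y4 - (p + q) * α * (2 * (G - 3) * (G - 4)) * y1
      - q * (2 * (G - 2) * (G - 3)) * y2, ?_⟩
    linear_combination -h - q * r5 - (p + q) * α * r4
  obtain ⟨s, hs⟩ := (hp.dvd_or_dvd hd).resolve_right h3
  set T := p + q with hT
  set N := 32 * (G - 2) * (G - 1) with hN
  set L := α ^ 2 - 16 * G * (G - 2) with hL
  refine ⟨T * N * (2 * (G - 3) * (G - 4)),
    - T * L * (2 * (G - 2) * (G - 3)) + s * γ * (2 * (G - 2) * (G - 3)), s * N, N * r, ?_⟩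
  apply mul_left_cancel₀ hp.ne_zero
  have hb : N * q = γ * s - T * L := by linear_combination hs
  have hy : y5 - (α * y4 - 16 * G * (G - 2) * y3) = N * y3 + 2 * (G - 2) * (G - 3) * γ * y2 := by
    rw [hN]; linear_combination r5
  have h' : γ * U = T * (α * y4 - 16 * G * (G - 2) * y3)
      + q * (y5 - (α * y4 - 16 * G * (G - 2) * y3)) + γ * r * y4 := by
    rw [hT]; linear_combination h
  rw [hy] at h'
  have hw : α * y4 - 16 * G * (G - 2) * y3 = L * y3 + α * (2 * (G - 3) * (G - 4) * γ * y1) := by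
    rw [hL]; linear_combination α * r4
  rw [hw] at h'
  linear_combination N * h' + (N * y3 + 2 * (G - 2) * (G - 3) * γ * y2) * hb

/-- For g ≥ 2 even and u ∈ ℂ[α,γ]: if γ²·u ∈ J_g^+ then u ∈ J_{g−4}^+. -/
theorem gamma_sq_mul_mem_Jp (g : ℕ) (hg : 2 ≤ g) (heven : Even g)
    (u : MvPolynomial (Fin 2) ℂ)
    (h : (X 1 : MvPolynomial (Fin 2) ℂ) ^ 2 * u ∈ Jp g) :
    u ∈ JpZ ((g : ℤ) - 4) := by
  have hz0 : zp 0 = 1 := by rw [zp]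
  obtain ⟨k, rfl⟩ := heven
  by_cases hk : k < 3
  · have htop : JpZ (((k + k : ℕ) : ℤ) - 4) = ⊤ := by
      rw [Ideal.eq_top_iff_one]
      apply Ideal.subset_span
      have : k = 1 ∨ k = 2 := by omega
      rcases this with rfl | rfl <;> simp [zpZ, hz0]
    rw [htop]; trivial
  obtain ⟨j, rfl⟩ : ∃ j, k = j + 3 := ⟨k - 3, by omega⟩
  have hJ : JpZ (((j + 3 + (j + 3) : ℕ) : ℤ) - 4) = Jp (2 * j + 2) := by
    have e : (((j + 3 + (j + 3) : ℕ) : ℤ) - 4) = ((2 * j + 2 : ℕ) : ℤ) := by push_cast; ring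
    have hZ : ∀ n : ℕ, zpZ (n : ℤ) = zp n := by
      intro n; simp [zpZ]
    rw [e, JpZ, Jp, hZ, show ((2 * j + 2 : ℕ) : ℤ) + 1 = ((2 * j + 2 + 1 : ℕ) : ℤ) by push_cast; ring,
      show ((2 * j + 2 : ℕ) : ℤ) + 2 = ((2 * j + 2 + 2 : ℕ) : ℤ) by push_cast; ring, hZ, hZ]
  rw [hJ]
  rw [show j + 3 + (j + 3) = 2 * j + 6 by ring, Jp, Ideal.mem_span_insert] at h
  obtain ⟨a, z, hz, hu⟩ := h
  rw [Ideal.mem_span_pair] at hz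
  obtain ⟨b, d, rfl⟩ := hz
  have hp : Prime (X 1 : MvPolynomial (Fin 2) ℂ) := MvPolynomial.X_prime
  set G : MvPolynomial (Fin 2) ℂ := 2 * (j : MvPolynomial (Fin 2) ℂ) + 6 with hG
  have r4 := zp_even j
  have r5 := zp_odd (j + 1)
  have r6 := zp_even (j + 1)
  have r7 := zp_odd (j + 2)
  have r8 := zp_even (j + 2)
  simp only [Nat.mul_add, Nat.add_assoc, Nat.reduceAdd, Nat.reduceMul] at r4 r5 r6 r7 r8 hu
  push_cast at r5 r6 r7 r8
  obtain ⟨p, q, r, h1⟩ := stage_one (X 0) (X 1) (zp (2 * j + 3)) (zp (2 * j + 4)) (zp (2 * j + 5))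
    (zp (2 * j + 6)) (zp (2 * j + 7)) (zp (2 * j + 8)) (X 1 * u) a b d G hp
    (not_dvd_zp_odd (j + 2)) (by rw [r6, hG]; ring) (by rw [r7, hG]; ring)
    (by rw [r8, hG]; ring) (by linear_combination hu)
  obtain ⟨c1, c2, c3, c4, h2⟩ := stage_two (X 0) (X 1) (zp (2 * j + 1)) (zp (2 * j + 2))
    (zp (2 * j + 3)) (zp (2 * j + 4)) (zp (2 * j + 5)) (16 * G ^ 2 * u) p q r G hp
    (not_dvd_zp_odd (j + 1)) (by rw [r4, hG]; ring) (by rw [r5, hG]; ring)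
    (by linear_combination h1)
  have hmem : 32 * (G - 2) * (G - 1) * (16 * G ^ 2 * u) ∈ Jp (2 * j + 2) := by
    rw [h2]
    refine Ideal.add_mem _ (Ideal.add_mem _ (Ideal.add_mem _ ?_ ?_) ?_) ?_
    · exact Ideal.mul_mem_left _ _ (alpha_mul_mem j)
    · exact Ideal.mul_mem_left _ _ (Ideal.subset_span (by simp))
    · exact Ideal.mul_mem_left _ _ (Ideal.subset_span (by simp))
    · exact Ideal.mul_mem_left _ _ (Ideal.subset_span (by simp))
  rw [← Ideal.Quotient.eq_zero_iff_mem] at hmem ⊢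
  apply nat_cancel (32 * (2 * j + 4) * (2 * j + 5) * (16 * (2 * j + 6) ^ 2)) (by positivity)
  rw [← hmem, hG]
  simp only [map_add, map_sub, map_mul, map_pow, map_one, map_natCast, map_ofNat]
  push_cast
  ring
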